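/- arXiv:1009.0540 — 2 statements merged into one kernel-verified Lean document; each statement's English description precedes it below -/
import Mathlib

section
/- Nonlinear Hilbert transform inequality for monotone even functions (Proposition nonlinlp): For every p ≥ 1 and σ > 0 there exists a constant C₀ > 0, depending only on p and σ, such that the following holds. Let f : ℝ → ℝ be C¹, even, bounded, with f(0) = 0 and f'(x) ≥ 0 for x > 0, and let Hf(x) = (1/π) lim_{R→∞} lim_{ε→0+} ∫_{ε<|x−y|<R} f(y)/(x−y) dy be its Hilbert transform (which exists for such f). Then − ∫_0^1 Hf(x) f'(x) f(x)^{p−1} / x^σ dx ≥ C₀ ∫_0^1 f(x)^{p+1} / x^{1+σ} dx, where the inequality is understood in the extended sense: if the right-hand side is infinite, then the left-hand side is infinite as well. -/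
open Set MeasureTheory Filter Topology

/-- `HilbertPVAt f x v` says that the iterated principal value
`lim_{R→∞} lim_{ε→0+} ∫_{ε<|x−y|<R} f(y)/(x−y) dy` exists and equals `v`
(so that the Hilbert transform of `f` at `x` is `v/π`). -/
def HilbertPVAt (f : ℝ → ℝ) (x v : ℝ) : Prop :=
  ∃ g : ℝ → ℝ,
    (∀ R, 0 < R → Tendsto (fun ε => ∫ y in {y : ℝ | ε < |x - y| ∧ |x - y| < R}, f y / (x - y))
      (nhdsWithin 0 (Ioi 0)) (nhds (g R))) ∧
    Tendsto g atTop (nhds v)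

/-!
Folding the principal value at `x` gives `-π Hf(x) = ∫_0^∞ (f(x + t) - f(x - t)) / t dt`, whose
integrand is nonnegative because `|x - t| ≤ |x + t|`. For `x` in a dyadic shell `(a/2, a)` the part
`a/2 < t < a` alone contributes `(f(a) - f(a/2)) / 2`, since there `x + t ≥ a` and `|x - t| ≤ a/2`.
On the shell, substituting `y = f(x)` and applying Cauchy–Schwarz to `∫ y ^ ((p - 1) / 2) dy` gives
`(f(a) - f(a/2)) ∫ f' f ^ (p - 1) ≥ c (f(a) ^ q - f(a/2) ^ q) ^ 2` with `q = (p + 1) / 2`.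
A discrete Hardy inequality with weights `2 ^ (kσ)` for the sequence `f(2⁻ᵏ) ^ q`, which decreases
to zero, then recovers `∑ 2 ^ (kσ) f(2⁻ᵏ) ^ (p + 1)` and hence the integral on the right-hand side.
-/

open scoped ENNReal NNReal

section DiscreteHardy

variable {s : ℝ} {u w : ℝ≥0∞}

lemma rpow_tsum_le_tsum_pow_mul_rpow (hs : 0 < s) (hu0 : u ≠ 0) (hu : u ≠ ∞) (D : ℕ → ℝ≥0∞) :
    (∑' i, D i) ^ s ≤ (1 - u ^ (-s⁻¹))⁻¹ ^ s * ∑' i, u ^ i * D i ^ s := by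
  set T := ∑' i, u ^ i * D i ^ s
  have hterm (i : ℕ) : D i ≤ (u ^ (-s⁻¹)) ^ i * T ^ s⁻¹ := by
    have hT : D i ^ s ≤ (u⁻¹) ^ i * T :=
      calc D i ^ s = (u⁻¹) ^ i * (u ^ i * D i ^ s) := by
            rw [← mul_assoc, ← mul_pow, ENNReal.inv_mul_cancel hu0 hu, one_pow, one_mul]
        _ ≤ (u⁻¹) ^ i * T := by gcongr; exact ENNReal.le_tsum i
    calc D i = (D i ^ s) ^ s⁻¹ := (ENNReal.rpow_rpow_inv hs.ne' _).symm
      _ ≤ ((u⁻¹) ^ i * T) ^ s⁻¹ := by gcongr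
      _ = (u ^ (-s⁻¹)) ^ i * T ^ s⁻¹ := by
        rw [ENNReal.mul_rpow_of_nonneg _ _ (by positivity), ENNReal.rpow_neg, ← ENNReal.inv_rpow,
          ← ENNReal.rpow_natCast, ← ENNReal.rpow_natCast, ← ENNReal.rpow_mul, ← ENNReal.rpow_mul,
          mul_comm (i : ℝ)]
  calc (∑' i, D i) ^ s ≤ (∑' i, (u ^ (-s⁻¹)) ^ i * T ^ s⁻¹) ^ s := by
        gcongr with i; exact hterm i
    _ = (1 - u ^ (-s⁻¹))⁻¹ ^ s * T := by
      rw [ENNReal.tsum_mul_right, ENNReal.tsum_geometric, ENNReal.mul_rpow_of_nonneg _ _ hs.le,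
        ENNReal.rpow_inv_rpow hs.ne']

lemma tsum_pow_mul_tsum_pow_mul_add_le (hw0 : w ≠ 0) (hw : w ≠ ∞) (E : ℕ → ℝ≥0∞) :
    ∑' k, w ^ k * ∑' i, u ^ i * E (k + i) ≤ (1 - u / w)⁻¹ * ∑' k, w ^ k * E k := by
  have hweight (k i : ℕ) : w ^ k * u ^ i = (u / w) ^ i * w ^ (k + i) := by
    rw [pow_add, mul_left_comm, ← mul_pow, ENNReal.div_mul_cancel hw0 hw]
  calc ∑' k, w ^ k * ∑' i, u ^ i * E (k + i)
      = ∑' k, ∑' i, (u / w) ^ i * (w ^ (k + i) * E (k + i)) := by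
        simp_rw [← ENNReal.tsum_mul_left, ← mul_assoc, hweight]
    _ = ∑' i, (u / w) ^ i * ∑' k, w ^ (k + i) * E (k + i) := by
        rw [ENNReal.tsum_comm]
        simp_rw [ENNReal.tsum_mul_left]
    _ ≤ ∑' i, (u / w) ^ i * ∑' k, w ^ k * E k := by
        gcongr ∑' i, (u / w) ^ i * ?_ with i
        exact ENNReal.tsum_comp_le_tsum_of_injective (add_left_injective i) (fun k => w ^ k * E k)
    _ = (1 - u / w)⁻¹ * ∑' k, w ^ k * E k := by
        rw [ENNReal.tsum_mul_right, ENNReal.tsum_geometric]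

lemma exists_tsum_pow_mul_tail_rpow_le (hs : 0 < s) (hw1 : 1 < w) (hw : w ≠ ∞) :
    ∃ C : ℝ≥0, 0 < C ∧ ∀ D : ℕ → ℝ≥0∞,
      ∑' k, w ^ k * (∑' i, D (k + i)) ^ s ≤ C * ∑' k, w ^ k * D k ^ s := by
  -- Growth `u > 1` makes the tail summable against `u ^ i`, and `u < w` pays for summing over `k`.
  obtain ⟨u, hu1, huw⟩ := exists_between hw1
  have hu0 : u ≠ 0 := (zero_lt_one.trans hu1).ne'
  have hw0 : w ≠ 0 := (zero_lt_one.trans hw1).ne'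
  have hr : u ^ (-s⁻¹) < 1 := ENNReal.rpow_lt_one_of_one_lt_of_neg hu1 (by simpa using hs)
  have hq : u / w < 1 := ENNReal.div_lt_of_lt_mul (by simpa using huw)
  set K := (1 - u ^ (-s⁻¹))⁻¹ ^ s * (1 - u / w)⁻¹
  have hK : K < ∞ := ENNReal.mul_lt_top
    (ENNReal.rpow_lt_top_of_nonneg hs.le (ENNReal.inv_ne_top.2 (tsub_pos_of_lt hr).ne'))
    (ENNReal.inv_lt_top.2 (tsub_pos_of_lt hq))
  obtain ⟨C, hKC, -⟩ := ENNReal.lt_iff_exists_nnreal_btwn.1 hK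
  refine ⟨C, ENNReal.coe_pos.1 (pos_of_gt hKC), fun D => ?_⟩
  calc ∑' k, w ^ k * (∑' i, D (k + i)) ^ s
      ≤ ∑' k, w ^ k * ((1 - u ^ (-s⁻¹))⁻¹ ^ s * ∑' i, u ^ i * D (k + i) ^ s) := by
        gcongr with k
        exact rpow_tsum_le_tsum_pow_mul_rpow hs hu0 huw.ne_top fun i => D (k + i)
    _ = (1 - u ^ (-s⁻¹))⁻¹ ^ s * ∑' k, w ^ k * ∑' i, u ^ i * D (k + i) ^ s := by
        simp_rw [mul_left_comm (w ^ _), ENNReal.tsum_mul_left]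
    _ ≤ (1 - u ^ (-s⁻¹))⁻¹ ^ s * ((1 - u / w)⁻¹ * ∑' k, w ^ k * D k ^ s) := by
        gcongr
        exact tsum_pow_mul_tsum_pow_mul_add_le hw0 hw fun k => D k ^ s
    _ ≤ C * ∑' k, w ^ k * D k ^ s := by
        rw [← mul_assoc]
        gcongr

lemma tsum_ofReal_sub_succ {v : ℕ → ℝ} (hv : Antitone v) {l : ℝ} (hl : Tendsto v atTop (𝓝 l)) :
    ∑' i, ENNReal.ofReal (v i - v (i + 1)) = ENNReal.ofReal (v 0 - l) := by
  have hnonneg (i : ℕ) : 0 ≤ v i - v (i + 1) := sub_nonneg.2 (hv i.le_succ)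
  have hsum : HasSum (fun i => v i - v (i + 1)) (v 0 - l) := by
    rw [hasSum_iff_tendsto_nat_of_nonneg hnonneg]
    simpa only [Finset.sum_range_sub'] using hl.const_sub (v 0)
  rw [← hsum.tsum_eq, ENNReal.ofReal_tsum_of_nonneg hnonneg hsum.summable]

lemma exists_tsum_pow_mul_ofReal_rpow_le (hs : 0 < s) (hw1 : 1 < w) (hw : w ≠ ∞) :
    ∃ C : ℝ≥0, 0 < C ∧ ∀ v : ℕ → ℝ, Antitone v → Tendsto v atTop (𝓝 0) →
      ∑' k, w ^ k * ENNReal.ofReal (v k) ^ s ≤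
        C * ∑' k, w ^ k * ENNReal.ofReal (v k - v (k + 1)) ^ s := by
  obtain ⟨C, hC, hardy⟩ := exists_tsum_pow_mul_tail_rpow_le hs hw1 hw
  refine ⟨C, hC, fun v hv hv0 => ?_⟩
  have htail (k : ℕ) :
      ENNReal.ofReal (v k) = ∑' i, ENNReal.ofReal (v (k + i) - v (k + i + 1)) := by
    have hshift : Tendsto (fun i => v (k + i)) atTop (𝓝 0) := by
      simpa only [add_comm k] using (tendsto_add_atTop_iff_nat k).2 hv0
    simpa [add_assoc] using
      (tsum_ofReal_sub_succ (fun i j hij => hv (by gcongr)) hshift).symm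
  simpa only [htail] using hardy fun k => ENNReal.ofReal (v k - v (k + 1))

end DiscreteHardy

lemma lintegral_Ioo_zero_one_eq_tsum {μ : Measure ℝ} [NullSingletonClass μ] {r : ℝ} (hr0 : 0 < r)
    (hr1 : r < 1) (g : ℝ → ℝ≥0∞) :
    ∫⁻ x in Ioo 0 1, g x ∂μ = ∑' k : ℕ, ∫⁻ x in Ioo (r ^ (k + 1)) (r ^ k), g x ∂μ := by
  have hcover : Ioc 0 1 = ⋃ k : ℕ, Ioc (r ^ (k + 1)) (r ^ k) := by
    refine Subset.antisymm (fun x hx => mem_iUnion.2 ?_) (iUnion_subset fun k => ?_)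
    · exact exists_nat_pow_near_of_lt_one hx.1 hx.2 hr0 hr1
    · exact Ioc_subset_Ioc (by positivity) (pow_le_one₀ hr0.le hr1.le)
  have hdisj : Pairwise (Function.onFun Disjoint fun k : ℕ => Ioc (r ^ (k + 1)) (r ^ k)) :=
    (pow_right_anti₀ hr0.le hr1.le).pairwise_disjoint_on_Ioc_succ
  simp_rw [setLIntegral_congr Ioo_ae_eq_Ioc]
  rw [hcover, lintegral_iUnion (fun _ => measurableSet_Ioc) hdisj]

lemma sq_lintegral_le_measure_univ_mul {α : Type*} [MeasurableSpace α] {μ : Measure α}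
    {g : α → ℝ≥0∞} (hg : AEMeasurable g μ) :
    (∫⁻ x, g x ∂μ) ^ 2 ≤ μ univ * ∫⁻ x, g x ^ 2 ∂μ := by
  have hholder := ENNReal.lintegral_mul_le_Lp_mul_Lq μ Real.HolderConjugate.two_two
    (aemeasurable_const (b := 1)) hg
  calc (∫⁻ x, g x ∂μ) ^ 2
      ≤ (μ univ ^ (1 / 2 : ℝ) * (∫⁻ x, g x ^ 2 ∂μ) ^ (1 / 2 : ℝ)) ^ 2 := by
        gcongr
        simpa using hholder
    _ = μ univ * ∫⁻ x, g x ^ 2 ∂μ := by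
        rw [← ENNReal.mul_rpow_of_nonneg _ _ (by norm_num), ← ENNReal.rpow_mul_natCast]
        norm_num

lemma ofReal_rpow_eq_ofReal_rpow_half_rpow_two {y : ℝ} (s : ℝ) (hy : 0 ≤ y) :
    ENNReal.ofReal (y ^ s) = ENNReal.ofReal (y ^ (s / 2)) ^ (2 : ℝ) := by
  rw [ENNReal.ofReal_rpow_of_nonneg (by positivity) zero_le_two, ← Real.rpow_mul hy,
    div_mul_cancel₀ _ two_ne_zero]

lemma ofReal_inv_rpow_pow {r : ℝ} (σ : ℝ) (hr : 0 ≤ r) (k : ℕ) :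
    ENNReal.ofReal (r ^ σ)⁻¹ ^ k = ENNReal.ofReal ((r ^ k) ^ σ)⁻¹ := by
  rw [← ENNReal.ofReal_pow (by positivity), inv_pow, Real.rpow_pow_comm hr]

lemma sq_ofReal_rpow_sub_rpow_le {A B p : ℝ} (hp : -1 < p) (hA : 0 ≤ A) (hAB : A ≤ B) :
    ENNReal.ofReal (B ^ ((p + 1) / 2) - A ^ ((p + 1) / 2)) ^ 2 ≤
      ENNReal.ofReal (((p + 1) / 2) ^ 2) *
        (ENNReal.ofReal (B - A) * ∫⁻ y in Ioo A B, ENNReal.ofReal (y ^ (p - 1))) := by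
  have hq : 0 < (p + 1) / 2 := by linarith
  have hnonneg {y : ℝ} (hy : y ∈ Ioo A B) : 0 ≤ y := hA.trans hy.1.le
  have hint : B ^ ((p + 1) / 2) - A ^ ((p + 1) / 2) =
      (p + 1) / 2 * ∫ y in Ioo A B, y ^ ((p - 1) / 2) := by
    rw [← integral_Ioc_eq_integral_Ioo, ← intervalIntegral.integral_of_le hAB,
      integral_rpow (Or.inl (by linarith)), show (p - 1) / 2 + 1 = (p + 1) / 2 by ring,
      mul_div_cancel₀ _ hq.ne']
  have hlint : ENNReal.ofReal (∫ y in Ioo A B, y ^ ((p - 1) / 2)) =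
      ∫⁻ y in Ioo A B, ENNReal.ofReal (y ^ ((p - 1) / 2)) := by
    refine ofReal_integral_eq_lintegral_ofReal ?_ ?_
    · exact (intervalIntegrable_iff_integrableOn_Ioo_of_le hAB).1
        (intervalIntegral.intervalIntegrable_rpow' (by linarith))
    · filter_upwards [ae_restrict_mem measurableSet_Ioo] with y hy
      exact Real.rpow_nonneg (hnonneg hy) _
  have hsq : ∫⁻ y in Ioo A B, ENNReal.ofReal (y ^ ((p - 1) / 2)) ^ 2 =
      ∫⁻ y in Ioo A B, ENNReal.ofReal (y ^ (p - 1)) := by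
    refine setLIntegral_congr_fun measurableSet_Ioo fun y hy => ?_
    rw [ofReal_rpow_eq_ofReal_rpow_half_rpow_two (p - 1) (hnonneg hy), ENNReal.rpow_two]
  rw [hint, ENNReal.ofReal_mul hq.le, hlint, mul_pow, ← ENNReal.ofReal_pow hq.le, ← hsq]
  gcongr
  simpa using sq_lintegral_le_measure_univ_mul (μ := volume.restrict (Ioo A B))
    (g := fun y => ENNReal.ofReal (y ^ ((p - 1) / 2))) (by fun_prop)

lemma lintegral_Ioo_le_lintegral_deriv_mul_comp {f f' : ℝ → ℝ} {a b : ℝ} (hab : a ≤ b)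
    (hcont : ContinuousOn f (Icc a b)) (hmono : MonotoneOn f (Ioo a b))
    (hderiv : ∀ x ∈ Ioo a b, HasDerivAt f (f' x) x) (u : ℝ → ℝ≥0∞) :
    ∫⁻ y in Ioo (f a) (f b), u y ≤ ∫⁻ x in Ioo a b, ENNReal.ofReal (f' x) * u (f x) :=
  calc ∫⁻ y in Ioo (f a) (f b), u y ≤ ∫⁻ y in f '' Ioo a b, u y :=
        lintegral_mono_set (intermediate_value_Ioo hab hcont)
    _ = ∫⁻ x in Ioo a b, ENNReal.ofReal (f' x) * u (f x) :=
        lintegral_image_eq_lintegral_deriv_mul_of_monotoneOn measurableSet_Ioo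
          (fun x hx => (hderiv x hx).hasDerivWithinAt) hmono u

section FoldedIntegral

variable {f : ℝ → ℝ} {x ε R : ℝ}

lemma setOf_lt_abs_sub_lt_eq_union (hε : 0 ≤ ε) :
    {y : ℝ | ε < |x - y| ∧ |x - y| < R} = Ioo (x - R) (x - ε) ∪ Ioo (x + ε) (x + R) := by
  ext y
  simp only [mem_ofPred_eq, mem_union, mem_Ioo]
  grind

lemma intervalIntegrable_div_sub (hf : LocallyIntegrable f) {c d : ℝ} (hx : x ∉ uIcc c d) :
    IntervalIntegrable (fun y => f y / (x - y)) volume c d := by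
  have hne : ∀ y ∈ uIcc c d, x - y ≠ 0 := fun y hy h => hx (by rwa [sub_eq_zero.1 h])
  have hinv : ContinuousOn (fun y => (x - y)⁻¹) (uIcc c d) := ContinuousOn.inv₀ (by fun_prop) hne
  simpa only [div_eq_mul_inv] using
    (hf.integrableOn_isCompact isCompact_uIcc).intervalIntegrable.mul_continuousOn hinv

lemma intervalIntegrable_comp_sub_div (hf : LocallyIntegrable f) (hε : 0 < ε) (hR : ε ≤ R) :
    IntervalIntegrable (fun t => f (x - t) / t) volume ε R := by
  have hx : x ∉ uIcc (x - ε) (x - R) := by grind [uIcc_of_ge]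
  simpa using (intervalIntegrable_div_sub hf hx).comp_sub_left x

lemma intervalIntegrable_comp_add_div (hf : LocallyIntegrable f) (hε : 0 < ε) (hR : ε ≤ R) :
    IntervalIntegrable (fun t => f (x + t) / t) volume ε R := by
  have hx : x ∉ uIcc (x + ε) (x + R) := by grind [uIcc_of_le]
  simpa [div_neg, Pi.neg_def] using ((intervalIntegrable_div_sub hf hx).comp_add_left x).neg

lemma intervalIntegrable_symm_diff_div (hf : LocallyIntegrable f) (hε : 0 < ε) (hR : ε ≤ R) :
    IntervalIntegrable (fun t => (f (x + t) - f (x - t)) / t) volume ε R := by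
  simpa only [sub_div] using
    (intervalIntegrable_comp_add_div hf hε hR).sub (intervalIntegrable_comp_sub_div hf hε hR)

lemma setIntegral_div_sub_eq_neg_intervalIntegral (hf : LocallyIntegrable f) (hε : 0 < ε)
    (hR : ε ≤ R) :
    ∫ y in {y : ℝ | ε < |x - y| ∧ |x - y| < R}, f y / (x - y) =
      -∫ t in ε..R, (f (x + t) - f (x - t)) / t := by
  have hle_left : x - R ≤ x - ε := by linarith
  have hle_right : x + ε ≤ x + R := by linarith
  have hleft : IntegrableOn (fun y => f y / (x - y)) (Ioo (x - R) (x - ε)) :=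
    (intervalIntegrable_iff_integrableOn_Ioo_of_le hle_left).1
      (intervalIntegrable_div_sub hf (by grind [uIcc_of_le]))
  have hright : IntegrableOn (fun y => f y / (x - y)) (Ioo (x + ε) (x + R)) :=
    (intervalIntegrable_iff_integrableOn_Ioo_of_le hle_right).1
      (intervalIntegrable_div_sub hf (by grind [uIcc_of_le]))
  have hdisj : Disjoint (Ioo (x - R) (x - ε)) (Ioo (x + ε) (x + R)) :=
    Set.disjoint_left.2 fun y hy hy' => by linarith [hy.2, hy'.1]
  calc ∫ y in {y : ℝ | ε < |x - y| ∧ |x - y| < R}, f y / (x - y)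
      = (∫ y in (x - R)..(x - ε), f y / (x - y)) + ∫ y in (x + ε)..(x + R), f y / (x - y) := by
        rw [setOf_lt_abs_sub_lt_eq_union hε.le,
          setIntegral_union hdisj measurableSet_Ioo hleft hright,
          ← integral_Ioc_eq_integral_Ioo, ← integral_Ioc_eq_integral_Ioo,
          ← intervalIntegral.integral_of_le hle_left, ← intervalIntegral.integral_of_le hle_right]
    _ = (∫ t in ε..R, f (x - t) / t) - ∫ t in ε..R, f (x + t) / t := by
        rw [← intervalIntegral.integral_comp_sub_left (fun y => f y / (x - y)),
          ← intervalIntegral.integral_comp_add_left (fun y => f y / (x - y))]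
        simp [div_neg, sub_eq_add_neg]
    _ = -∫ t in ε..R, (f (x + t) - f (x - t)) / t := by
        simp_rw [sub_div]
        rw [intervalIntegral.integral_sub (intervalIntegrable_comp_add_div hf hε hR)
          (intervalIntegrable_comp_sub_div hf hε hR), neg_sub]

lemma HilbertPVAt.le_neg_of_eventually_le {v c : ℝ} (hf : LocallyIntegrable f)
    (hv : HilbertPVAt f x v) (hc : ∀ᶠ R in atTop, ∀ᶠ ε in 𝓝[>] 0,
      c ≤ ∫ t in ε..R, (f (x + t) - f (x - t)) / t) :
    c ≤ -v := by
  obtain ⟨g, hg, hgv⟩ := hv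
  refine le_neg.1 (le_of_tendsto hgv ?_)
  filter_upwards [hc, eventually_gt_atTop 0] with R hcR hR
  refine le_of_tendsto (hg R hR) ?_
  filter_upwards [hcR, Ioo_mem_nhdsGT hR] with ε hcε hε
  rw [setIntegral_div_sub_eq_neg_intervalIntegral hf hε.1 hε.2.le]
  exact neg_le_neg hcε

end FoldedIntegral

section EvenMonotone

variable {f : ℝ → ℝ}

lemma le_of_even_of_abs_le_abs (heven : Function.Even f) (hmono : MonotoneOn f (Ici 0)) {y z : ℝ}
    (h : |y| ≤ |z|) : f y ≤ f z := by
  have habs (y : ℝ) : f |y| = f y := by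
    rcases abs_choice y with hy | hy <;> simp only [hy, heven y]
  simpa only [habs] using hmono (abs_nonneg y) (abs_nonneg z) h

lemma locallyIntegrable_of_even_of_monotoneOn (heven : Function.Even f)
    (hmono : MonotoneOn f (Ici 0)) : LocallyIntegrable f := by
  have hanti : AntitoneOn f (Iic 0) := fun _ _ z hz hyz =>
    le_of_even_of_abs_le_abs heven hmono (abs_le_abs_of_nonpos hz hyz)
  refine locallyIntegrable_iff.2 fun K hK => ?_
  rw [← inter_univ K, ← Iic_union_Ici (a := 0), inter_union_distrib_left]
  exact ((hanti.mono inter_subset_right).integrableOn_isCompact (hK.inter_right isClosed_Iic)).union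
    ((hmono.mono inter_subset_right).integrableOn_isCompact (hK.inter_right isClosed_Ici))

lemma half_sub_le_intervalIntegral_symm_diff_div (heven : Function.Even f)
    (hmono : MonotoneOn f (Ici 0)) {a x ε R : ℝ} (hx : x ∈ Icc (a / 2) a) (hε : 0 < ε)
    (hεa : ε ≤ a / 2) (hR : a ≤ R) :
    (f a - f (a / 2)) / 2 ≤ ∫ t in ε..R, (f (x + t) - f (x - t)) / t := by
  have ha : 0 < a / 2 := hε.trans_le hεa
  have hlocal := locallyIntegrable_of_even_of_monotoneOn heven hmono
  have hle {y z : ℝ} (h : |y| ≤ |z|) : f y ≤ f z := le_of_even_of_abs_le_abs heven hmono h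
  calc (f a - f (a / 2)) / 2 = ∫ _ in (a / 2)..a, (f a - f (a / 2)) / a := by
        rw [intervalIntegral.integral_const, smul_eq_mul, sub_half, div_mul_div_comm, mul_comm 2,
          mul_div_mul_left _ _ (by linarith)]
    _ ≤ ∫ t in (a / 2)..a, (f (x + t) - f (x - t)) / t := by
        refine intervalIntegral.integral_mono_on (by linarith) intervalIntegrable_const
          (intervalIntegrable_symm_diff_div hlocal ha (by linarith)) fun t ht => ?_
        have hfar : f a ≤ f (x + t) := hle (by grind)
        have hnear : f (x - t) ≤ f (a / 2) := hle (by grind)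
        have hincr : f (a / 2) ≤ f a := hle (by grind)
        exact div_le_div₀ (by linarith) (by linarith) (ha.trans_le ht.1) ht.2
    _ ≤ ∫ t in ε..R, (f (x + t) - f (x - t)) / t := by
        refine intervalIntegral.integral_mono_interval hεa (by linarith) hR ?_
          (intervalIntegrable_symm_diff_div hlocal hε (by linarith))
        filter_upwards [ae_restrict_mem measurableSet_Ioc] with t ht
        have hdiff : f (x - t) ≤ f (x + t) := hle (by grind)
        exact div_nonneg (sub_nonneg.2 hdiff) (hε.trans ht.1).le

lemma HilbertPVAt.half_sub_le_neg (heven : Function.Even f) (hmono : MonotoneOn f (Ici 0))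
    {a x v : ℝ} (ha : 0 < a) (hx : x ∈ Icc (a / 2) a) (hv : HilbertPVAt f x v) :
    (f a - f (a / 2)) / 2 ≤ -v := by
  refine hv.le_neg_of_eventually_le (locallyIntegrable_of_even_of_monotoneOn heven hmono) ?_
  filter_upwards [eventually_ge_atTop a] with R hR
  filter_upwards [Ioo_mem_nhdsGT (half_pos ha)] with ε hε
  exact half_sub_le_intervalIntegral_symm_diff_div heven hmono hx hε.1 hε.2.le hR

lemma lintegral_rpow_div_rpow_le (hmono : MonotoneOn f (Ici 0)) (hf0 : 0 ≤ f 0) {s σ a : ℝ}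
    (hs : 0 ≤ s) (hσ : 0 ≤ 1 + σ) (ha : 0 < a) :
    ∫⁻ x in Ioo (a / 2) a, ENNReal.ofReal (f x ^ s / x ^ (1 + σ)) ≤
      ENNReal.ofReal (2 ^ σ) * (ENNReal.ofReal (a ^ σ)⁻¹ * ENNReal.ofReal (f a ^ s)) := by
  have hnonneg {x : ℝ} (hx : 0 ≤ x) : 0 ≤ f x := hf0.trans (hmono self_mem_Ici hx hx)
  have hfa := hnonneg ha.le
  calc ∫⁻ x in Ioo (a / 2) a, ENNReal.ofReal (f x ^ s / x ^ (1 + σ))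
      ≤ ∫⁻ _ in Ioo (a / 2) a, ENNReal.ofReal (f a ^ s / (a / 2) ^ (1 + σ)) := by
        refine setLIntegral_mono measurable_const fun x hx => ENNReal.ofReal_le_ofReal ?_
        have hx0 : 0 ≤ x := by linarith [hx.1]
        have hfx := hnonneg hx0
        have hfxa : f x ≤ f a := hmono hx0 ha.le hx.2.le
        have hax := hx.1.le
        gcongr
    _ = ENNReal.ofReal (2 ^ σ) * (ENNReal.ofReal (a ^ σ)⁻¹ * ENNReal.ofReal (f a ^ s)) := by
        rw [setLIntegral_const, Real.volume_Ioo, ← ENNReal.ofReal_mul (by positivity),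
          ← ENNReal.ofReal_mul (by positivity), ← ENNReal.ofReal_mul (by positivity),
          Real.rpow_add (by positivity), Real.rpow_one, Real.div_rpow ha.le zero_le_two]
        congr 1
        field_simp
        ring

lemma sq_ofReal_rpow_sub_rpow_le_lintegral_deriv {p a b : ℝ} (hp : -1 < p) (hab : a ≤ b)
    (hfa : 0 ≤ f a) (hmono : MonotoneOn f (Icc a b)) (hcont : ContinuousOn f (Icc a b))
    (hdiff : DifferentiableOn ℝ f (Ioo a b)) :
    ENNReal.ofReal (f b ^ ((p + 1) / 2) - f a ^ ((p + 1) / 2)) ^ 2 ≤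
      ENNReal.ofReal (((p + 1) / 2) ^ 2) * (ENNReal.ofReal (f b - f a) *
        ∫⁻ x in Ioo a b, ENNReal.ofReal (deriv f x) * ENNReal.ofReal (f x ^ (p - 1))) := by
  have hfab : f a ≤ f b := hmono (left_mem_Icc.2 hab) (right_mem_Icc.2 hab) hab
  refine (sq_ofReal_rpow_sub_rpow_le hp hfa hfab).trans (mul_le_mul_right (mul_le_mul_right ?_ _) _)
  exact lintegral_Ioo_le_lintegral_deriv_mul_comp hab hcont (hmono.mono Ioo_subset_Icc_self)
    (fun x hx => (hdiff.differentiableAt (Ioo_mem_nhds hx.1 hx.2)).hasDerivAt)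
    (fun y => ENNReal.ofReal (y ^ (p - 1)))

lemma ofReal_mul_deriv_mul_rpow_le {p σ a x h : ℝ} (hσ : 0 ≤ σ) (ha : 0 < a)
    (heven : Function.Even f) (hmono : MonotoneOn f (Ici 0)) (hf0 : 0 ≤ f 0)
    (hx : x ∈ Icc (a / 2) a) (hH : HilbertPVAt f x (Real.pi * h)) :
    ENNReal.ofReal ((f a - f (a / 2)) / (2 * Real.pi) / a ^ σ) *
        (ENNReal.ofReal (deriv f x) * ENNReal.ofReal (f x ^ (p - 1))) ≤
      ENNReal.ofReal (-(h * deriv f x * f x ^ (p - 1) / x ^ σ)) := by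
  have hx0 : 0 < x := (half_pos ha).trans_le hx.1
  have hxa := hx.2
  have hderiv : 0 ≤ deriv f x := by
    rw [← derivWithin_of_mem_nhds (Ici_mem_nhds hx0)]
    exact hmono.derivWithin_nonneg
  have hfx : 0 ≤ f x := hf0.trans (hmono self_mem_Ici hx0.le hx0.le)
  have hincr : 0 ≤ f a - f (a / 2) :=
    sub_nonneg.2 (hmono (half_pos ha).le ha.le (half_le_self ha.le))
  have hHx : (f a - f (a / 2)) / (2 * Real.pi) ≤ -h := by
    have := hH.half_sub_le_neg heven hmono ha hx
    rw [div_le_iff₀ (by positivity)]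
    linarith
  have hH0 : 0 ≤ -h := le_trans (by positivity) hHx
  rw [← ENNReal.ofReal_mul hderiv, ← ENNReal.ofReal_mul (by positivity)]
  refine ENNReal.ofReal_le_ofReal ?_
  calc (f a - f (a / 2)) / (2 * Real.pi) / a ^ σ * (deriv f x * f x ^ (p - 1))
      ≤ -h / x ^ σ * (deriv f x * f x ^ (p - 1)) := by gcongr
    _ = -(h * deriv f x * f x ^ (p - 1) / x ^ σ) := by ring

lemma sq_ofReal_rpow_sub_rpow_le_lintegral_hilbert {Hf : ℝ → ℝ} {p σ a : ℝ} (hp : -1 < p)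
    (hσ : 0 ≤ σ) (ha : 0 < a) (heven : Function.Even f) (hmono : MonotoneOn f (Ici 0))
    (hf0 : 0 ≤ f 0) (hcont : ContinuousOn f (Icc (a / 2) a))
    (hdiff : DifferentiableOn ℝ f (Ioo (a / 2) a))
    (hH : ∀ x ∈ Ioo (a / 2) a, HilbertPVAt f x (Real.pi * Hf x)) :
    ENNReal.ofReal (a ^ σ)⁻¹ *
        ENNReal.ofReal (f a ^ ((p + 1) / 2) - f (a / 2) ^ ((p + 1) / 2)) ^ 2 ≤
      ENNReal.ofReal (2 * Real.pi * ((p + 1) / 2) ^ 2) * ∫⁻ x in Ioo (a / 2) a,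
        ENNReal.ofReal (-(Hf x * deriv f x * f x ^ (p - 1) / x ^ σ)) := by
  have hsub : Icc (a / 2) a ⊆ Ici 0 := Icc_subset_Ici_self.trans (Ici_subset_Ici.2 (by positivity))
  have hfa : 0 ≤ f (a / 2) := hf0.trans (hmono self_mem_Ici (half_pos ha).le (half_pos ha).le)
  set I := ∫⁻ x in Ioo (a / 2) a, ENNReal.ofReal (deriv f x) * ENNReal.ofReal (f x ^ (p - 1))
  have hconst : ENNReal.ofReal (a ^ σ)⁻¹ * ENNReal.ofReal (f a - f (a / 2)) =
      ENNReal.ofReal (2 * Real.pi) *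
        ENNReal.ofReal ((f a - f (a / 2)) / (2 * Real.pi) / a ^ σ) := by
    rw [← ENNReal.ofReal_mul (by positivity), ← ENNReal.ofReal_mul (by positivity)]
    congr 1
    field_simp
  calc ENNReal.ofReal (a ^ σ)⁻¹ *
        ENNReal.ofReal (f a ^ ((p + 1) / 2) - f (a / 2) ^ ((p + 1) / 2)) ^ 2
      ≤ ENNReal.ofReal (a ^ σ)⁻¹ *
          (ENNReal.ofReal (((p + 1) / 2) ^ 2) * (ENNReal.ofReal (f a - f (a / 2)) * I)) := by
        gcongr
        exact sq_ofReal_rpow_sub_rpow_le_lintegral_deriv hp (half_le_self ha.le) hfa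
          (hmono.mono hsub) hcont hdiff
    _ = ENNReal.ofReal (((p + 1) / 2) ^ 2) *
          (ENNReal.ofReal (a ^ σ)⁻¹ * ENNReal.ofReal (f a - f (a / 2))) * I := by ring
    _ = ENNReal.ofReal (2 * Real.pi * ((p + 1) / 2) ^ 2) *
          (ENNReal.ofReal ((f a - f (a / 2)) / (2 * Real.pi) / a ^ σ) * I) := by
        rw [hconst, ENNReal.ofReal_mul (p := 2 * Real.pi) (by positivity)]
        ring
    _ ≤ ENNReal.ofReal (2 * Real.pi * ((p + 1) / 2) ^ 2) * ∫⁻ x in Ioo (a / 2) a,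
          ENNReal.ofReal (-(Hf x * deriv f x * f x ^ (p - 1) / x ^ σ)) := by
        rw [← lintegral_const_mul' _ _ ENNReal.ofReal_ne_top]
        refine mul_le_mul_right (setLIntegral_mono' measurableSet_Ioo fun x hx => ?_) _
        exact ofReal_mul_deriv_mul_rpow_le hσ ha heven hmono hf0 (Ioo_subset_Icc_self hx) (hH x hx)

lemma lintegral_rpow_div_rpow_le_tsum (hmono : MonotoneOn f (Ici 0)) (hf0 : 0 ≤ f 0) {s σ : ℝ}
    (hs : 0 ≤ s) (hσ : 0 ≤ 1 + σ) :
    ∫⁻ x in Ioo 0 1, ENNReal.ofReal (f x ^ s / x ^ (1 + σ)) ≤ ENNReal.ofReal (2 ^ σ) *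
      ∑' k : ℕ, ENNReal.ofReal ((1 / 2) ^ σ)⁻¹ ^ k * ENNReal.ofReal (f ((1 / 2) ^ k) ^ s) := by
  rw [lintegral_Ioo_zero_one_eq_tsum one_half_pos one_half_lt_one, ← ENNReal.tsum_mul_left]
  gcongr with k
  rw [ofReal_inv_rpow_pow _ one_half_pos.le, pow_succ, mul_one_div]
  exact lintegral_rpow_div_rpow_le hmono hf0 hs hσ (by positivity)

lemma tsum_sq_ofReal_rpow_sub_rpow_le_lintegral_hilbert {Hf : ℝ → ℝ} {p σ : ℝ} (hp : -1 < p)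
    (hσ : 0 ≤ σ) (heven : Function.Even f) (hmono : MonotoneOn f (Ici 0)) (hf0 : 0 ≤ f 0)
    (hcont : ContinuousOn f (Icc 0 1)) (hdiff : DifferentiableOn ℝ f (Ioo 0 1))
    (hH : ∀ x ∈ Ioo (0 : ℝ) 1, HilbertPVAt f x (Real.pi * Hf x)) :
    ∑' k : ℕ, ENNReal.ofReal ((1 / 2) ^ σ)⁻¹ ^ k * ENNReal.ofReal
        (f ((1 / 2) ^ k) ^ ((p + 1) / 2) - f ((1 / 2) ^ (k + 1)) ^ ((p + 1) / 2)) ^ 2 ≤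
      ENNReal.ofReal (2 * Real.pi * ((p + 1) / 2) ^ 2) * ∫⁻ x in Ioo 0 1,
        ENNReal.ofReal (-(Hf x * deriv f x * f x ^ (p - 1) / x ^ σ)) := by
  rw [lintegral_Ioo_zero_one_eq_tsum one_half_pos one_half_lt_one, ← ENNReal.tsum_mul_left]
  refine ENNReal.tsum_le_tsum fun k => ?_
  have hle : (1 / 2 : ℝ) ^ k ≤ 1 := pow_le_one₀ one_half_pos.le one_half_lt_one.le
  have hIoo : Ioo ((1 / 2 : ℝ) ^ k / 2) ((1 / 2) ^ k) ⊆ Ioo 0 1 :=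
    Ioo_subset_Ioo (by positivity) hle
  rw [ofReal_inv_rpow_pow _ one_half_pos.le, pow_succ (1 / 2 : ℝ), mul_one_div]
  exact sq_ofReal_rpow_sub_rpow_le_lintegral_hilbert hp hσ (by positivity) heven hmono hf0
    (hcont.mono (Icc_subset_Icc (by positivity) hle)) (hdiff.mono hIoo) fun x hx => hH x (hIoo hx)

lemma antitone_rpow_comp_pow (hmono : MonotoneOn f (Ici 0)) (hf0 : 0 ≤ f 0) {q r : ℝ} (hq : 0 ≤ q)
    (hr0 : 0 ≤ r) (hr1 : r ≤ 1) : Antitone fun k : ℕ => f (r ^ k) ^ q := fun k j hkj =>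
  Real.rpow_le_rpow (hf0.trans (hmono self_mem_Ici (pow_nonneg hr0 j) (pow_nonneg hr0 j)))
    (hmono (pow_nonneg hr0 j) (pow_nonneg hr0 k) (pow_le_pow_of_le_one hr0 hr1 hkj)) hq

lemma tendsto_rpow_comp_pow_zero (hf : ContinuousWithinAt f (Ici 0) 0) (hf0 : f 0 = 0) {q r : ℝ}
    (hq : 0 < q) (hr0 : 0 ≤ r) (hr1 : r < 1) :
    Tendsto (fun k : ℕ => f (r ^ k) ^ q) atTop (𝓝 0) := by
  have hpow : Tendsto (fun k : ℕ => r ^ k) atTop (𝓝[Ici 0] 0) :=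
    tendsto_nhdsWithin_iff.2 ⟨tendsto_pow_atTop_nhds_zero_of_lt_one hr0 hr1,
      Eventually.of_forall fun k => pow_nonneg hr0 k⟩
  simpa only [hf0, Function.comp_def, Real.zero_rpow hq.ne'] using
    (hf.tendsto.comp hpow).rpow_const (Or.inr hq.le)

end EvenMonotone

theorem nonlinear_hilbert_inequality_general {p σ : ℝ} (hp : -1 < p) (hσ : 0 < σ) :
    ∃ C₀ > (0 : ℝ), ∀ f Hf : ℝ → ℝ, Function.Even f → MonotoneOn f (Ici 0) → f 0 = 0 →
      ContinuousOn f (Icc 0 1) → DifferentiableOn ℝ f (Ioo 0 1) →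
      (∀ x ∈ Ioo (0 : ℝ) 1, HilbertPVAt f x (Real.pi * Hf x)) →
      ENNReal.ofReal C₀ *
          (∫⁻ x in Ioo (0 : ℝ) 1, ENNReal.ofReal (f x ^ (p + 1) / x ^ (1 + σ)))
        ≤ ∫⁻ x in Ioo (0 : ℝ) 1,
            ENNReal.ofReal (-(Hf x * deriv f x * f x ^ (p - 1) / x ^ σ)) := by
  have hq : 0 < (p + 1) / 2 := by linarith
  set w : ℝ≥0∞ := ENNReal.ofReal ((1 / 2) ^ σ)⁻¹
  have hw : 1 < w := ENNReal.one_lt_ofReal.2 <| (one_lt_inv₀ (by positivity)).2 <|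
    Real.rpow_lt_one one_half_pos.le one_half_lt_one hσ
  obtain ⟨C, hC, hardy⟩ := exists_tsum_pow_mul_ofReal_rpow_le two_pos hw ENNReal.ofReal_ne_top
  set L : ℝ := 2 * Real.pi * ((p + 1) / 2) ^ 2
  refine ⟨(2 ^ σ * (C * L))⁻¹, by positivity, fun f Hf heven hmono hf0 hcont hdiff hH => ?_⟩
  set J := ∫⁻ x in Ioo (0 : ℝ) 1,
    ENNReal.ofReal (-(Hf x * deriv f x * f x ^ (p - 1) / x ^ σ))
  set v : ℕ → ℝ := fun k => f ((1 / 2) ^ k) ^ ((p + 1) / 2)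
  have hv : Antitone v :=
    antitone_rpow_comp_pow hmono hf0.ge hq.le one_half_pos.le one_half_lt_one.le
  have hv0 : Tendsto v atTop (𝓝 0) := by
    refine tendsto_rpow_comp_pow_zero ?_ hf0 hq one_half_pos.le one_half_lt_one
    exact (hcont 0 (by simp)).mono_of_mem_nhdsWithin (Icc_mem_nhdsGE one_pos)
  have hsq (k : ℕ) : ENNReal.ofReal (f ((1 / 2) ^ k) ^ (p + 1)) =
      ENNReal.ofReal (v k) ^ (2 : ℝ) :=
    ofReal_rpow_eq_ofReal_rpow_half_rpow_two (p + 1) <|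
      hf0.ge.trans (hmono self_mem_Ici (by simp) (by positivity))
  rw [ENNReal.ofReal_inv_of_pos (by positivity), ENNReal.inv_mul_le_iff (by positivity)
    ENNReal.ofReal_ne_top]
  calc ∫⁻ x in Ioo (0 : ℝ) 1, ENNReal.ofReal (f x ^ (p + 1) / x ^ (1 + σ))
      ≤ ENNReal.ofReal (2 ^ σ) * ∑' k, w ^ k * ENNReal.ofReal (v k) ^ (2 : ℝ) := by
        simpa only [hsq] using
          lintegral_rpow_div_rpow_le_tsum (s := p + 1) (σ := σ) hmono hf0.ge
            (by linarith) (by linarith)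
    _ ≤ ENNReal.ofReal (2 ^ σ) *
          (C * ∑' k, w ^ k * ENNReal.ofReal (v k - v (k + 1)) ^ (2 : ℝ)) := by
        gcongr
        exact hardy v hv hv0
    _ ≤ ENNReal.ofReal (2 ^ σ) * (C * (ENNReal.ofReal L * J)) := by
        gcongr
        simpa only [ENNReal.rpow_two] using tsum_sq_ofReal_rpow_sub_rpow_le_lintegral_hilbert
          hp hσ.le heven hmono hf0.ge hcont hdiff hH
    _ = ENNReal.ofReal (2 ^ σ * (C * L)) * J := by
        rw [ENNReal.ofReal_mul (p := 2 ^ σ) (by positivity), ENNReal.ofReal_mul C.coe_nonneg,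
          ENNReal.ofReal_coe_nnreal, mul_assoc, mul_assoc]

/-- **Nonlinear Hilbert transform inequality for monotone even functions (Prop. nonlinlp).**
For every `p ≥ 1`, `σ > 0` there is `C₀ = C₀(p,σ) > 0` such that for every `C¹`, even,
bounded `f` with `f(0) = 0` and `f' ≥ 0` on `(0,∞)`, whose Hilbert transform `Hf` exists
everywhere, one has `−∫_0^1 Hf(x) f'(x) f(x)^{p−1} / x^σ dx ≥ C₀ ∫_0^1 f(x)^{p+1} / x^{1+σ} dx`,
understood in the extended reals (both integrands are nonnegative). -/
theorem nonlinear_hilbert_inequality (p σ : ℝ) (hp : 1 ≤ p) (hσ : 0 < σ) :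
    ∃ C₀ > (0:ℝ), ∀ (f Hf : ℝ → ℝ) (M : ℝ),
      ContDiff ℝ 1 f → (∀ x, f (-x) = f x) → (∀ x, |f x| ≤ M) → f 0 = 0 →
      (∀ x > (0:ℝ), 0 ≤ deriv f x) →
      (∀ x, HilbertPVAt f x (Real.pi * Hf x)) →
      ENNReal.ofReal C₀ *
          (∫⁻ x in Ioo (0:ℝ) 1, ENNReal.ofReal (f x ^ (p + 1) / x ^ (1 + σ)))
        ≤ ∫⁻ x in Ioo (0:ℝ) 1,
            ENNReal.ofReal (-(Hf x * deriv f x * f x ^ (p - 1) / x ^ σ)) := by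
  obtain ⟨C₀, hC₀, hle⟩ := nonlinear_hilbert_inequality_general (by linarith : -1 < p) hσ
  refine ⟨C₀, hC₀, fun f Hf M hf heven _ hf0 hderiv hH => ?_⟩
  have hdiff : Differentiable ℝ f := hf.differentiable one_ne_zero
  have hmono : MonotoneOn f (Ici 0) :=
    monotoneOn_of_deriv_nonneg (convex_Ici 0) hf.continuous.continuousOn hdiff.differentiableOn
      fun x hx => hderiv x (by simpa using hx)
  exact hle f Hf heven hmono hf0 hf.continuous.continuousOn hdiff.differentiableOn fun x _ => hH x
end

section
/- Representation formula for the Hilbert transform of an even function (Lemma htest): Let f : ℝ → ℝ be C¹, even, and bounded, and let Hf(x) = (1/π) lim_{R→∞} lim_{ε→0+} ∫_{ε<|x−y|<R} f(y)/(x−y) dy be its Hilbert transform, assumed to exist at the point x > 0 along with the integrals below. Then π · Hf(x) = ∫_0^{2x} log| (y−x)/x | f'(y) dy + ∫_x^∞ ( f(y−x) − f(y+x) ) / y dy, where the first integral converges absolutely (the logarithmic singularity at y = x is integrable since f' is continuous) and the second integral converges as an improper integral at infinity. -/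
open Set MeasureTheory Filter Topology

/-!
Substituting `y = x ∓ t` turns the truncated integral over `ε < |x - y| < R` into
`∫_ε^R (f (x - t) - f (x + t)) / t dt`. Its numerator `φ` vanishes at `0` and is differentiable
there, so the integrand is integrable at `0` and the limit `ε → 0` just replaces `ε` by `0`.
On `(0, c)` one integrates by parts with the primitive `log (t / c)` of `1 / t`: it vanishes at
`t = c`, while at `t = 0` its singularity is killed by `φ t = O(t)`. Unfolding the resulting
integral of `log (t / c) * φ' t` about `x` gives the logarithmic integral over `(x - c, x + c)`.
The representation formula is the case `c = x`, where evenness gives `f (x - t) = f (t - x)`.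
-/

section Folding

variable {E : Type*} [NormedAddCommGroup E] {g : ℝ → E} {x a b : ℝ}

theorem intervalIntegrable_comp_sub_add_comp_add
    (hleft : IntervalIntegrable g volume (x - b) (x - a))
    (hright : IntervalIntegrable g volume (x + a) (x + b)) :
    IntervalIntegrable (fun t => g (x - t) + g (x + t)) volume a b :=
  .add (by simpa using (hleft.comp_sub_left x).symm) (by simpa using hright.comp_add_left x)

theorem intervalIntegrable_left_half (hg : IntervalIntegrable g volume (x - b) (x + b)) :
    IntervalIntegrable g volume (x - b) x :=
  hg.mono_set (by grind [uIcc_subset_uIcc_left, mem_uIcc])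

theorem intervalIntegrable_right_half (hg : IntervalIntegrable g volume (x - b) (x + b)) :
    IntervalIntegrable g volume x (x + b) :=
  hg.mono_set (by grind [uIcc_subset_uIcc_right, mem_uIcc])

theorem intervalIntegrable_comp_sub_add_comp_add_zero
    (hg : IntervalIntegrable g volume (x - b) (x + b)) :
    IntervalIntegrable (fun t => g (x - t) + g (x + t)) volume 0 b :=
  intervalIntegrable_comp_sub_add_comp_add (by simpa using intervalIntegrable_left_half hg)
    (by simpa using intervalIntegrable_right_half hg)

variable [NormedSpace ℝ E]

theorem integral_comp_sub_add_comp_add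
    (hleft : IntervalIntegrable g volume (x - b) (x - a))
    (hright : IntervalIntegrable g volume (x + a) (x + b)) :
    ∫ t in a..b, (g (x - t) + g (x + t))
      = (∫ y in x - b..x - a, g y) + ∫ y in x + a..x + b, g y := by
  rw [intervalIntegral.integral_add (by simpa using (hleft.comp_sub_left x).symm)
      (by simpa using hright.comp_add_left x),
    intervalIntegral.integral_comp_sub_left, intervalIntegral.integral_comp_add_left]

theorem integral_comp_sub_add_comp_add_zero
    (hg : IntervalIntegrable g volume (x - b) (x + b)) :
    ∫ t in (0 : ℝ)..b, (g (x - t) + g (x + t)) = ∫ y in x - b..x + b, g y := by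
  have hleft := intervalIntegrable_left_half hg
  have hright := intervalIntegrable_right_half hg
  rw [integral_comp_sub_add_comp_add (by simpa using hleft) (by simpa using hright), sub_zero,
    add_zero, intervalIntegral.integral_add_adjacent_intervals hleft hright]

theorem setOf_lt_abs_sub_and_abs_sub_lt (ha : 0 ≤ a) :
    {y : ℝ | a < |x - y| ∧ |x - y| < b} = Ioo (x - b) (x - a) ∪ Ioo (x + a) (x + b) := by
  ext y
  simp only [mem_ofPred_eq, mem_union, mem_Ioo, lt_abs, abs_lt]
  grind

theorem setIntegral_lt_abs_sub_and_abs_sub_lt (ha : 0 ≤ a) (hab : a ≤ b)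
    (hleft : IntervalIntegrable g volume (x - b) (x - a))
    (hright : IntervalIntegrable g volume (x + a) (x + b)) :
    ∫ y in {y : ℝ | a < |x - y| ∧ |x - y| < b}, g y = ∫ t in a..b, (g (x - t) + g (x + t)) := by
  have hdisj : Disjoint (Ioo (x - b) (x - a)) (Ioo (x + a) (x + b)) :=
    Set.disjoint_left.2 fun y hy hy' => by linarith [hy.2, hy'.1]
  have hsub : x - b ≤ x - a := by linarith
  have hadd : x + a ≤ x + b := by linarith
  rw [setOf_lt_abs_sub_and_abs_sub_lt ha, setIntegral_union hdisj measurableSet_Ioo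
      ((intervalIntegrable_iff_integrableOn_Ioo_of_le hsub).1 hleft)
      ((intervalIntegrable_iff_integrableOn_Ioo_of_le hadd).1 hright),
    integral_comp_sub_add_comp_add hleft hright, intervalIntegral.integral_of_le hsub,
    intervalIntegral.integral_of_le hadd, integral_Ioc_eq_integral_Ioo,
    integral_Ioc_eq_integral_Ioo]

end Folding

section IntegrationByParts

theorem continuous_dslope {𝕜 E : Type*} [NontriviallyNormedField 𝕜] [NormedAddCommGroup E]
    [NormedSpace 𝕜 E] {f : 𝕜 → E} {a : 𝕜} (hf : Continuous f) (hfa : DifferentiableAt 𝕜 f a) :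
    Continuous (dslope f a) := by
  rw [← continuousOn_univ, continuousOn_dslope univ_mem]
  exact ⟨hf.continuousOn, hfa⟩

variable {φ : ℝ → ℝ}

theorem intervalIntegrable_div_id (hφ : Continuous φ) (hφ₀ : DifferentiableAt ℝ φ 0)
    (hzero : φ 0 = 0) (a b : ℝ) : IntervalIntegrable (fun t => φ t / t) volume a b := by
  refine ((continuous_dslope hφ hφ₀).intervalIntegrable a b).congr_ae (ae_restrict_of_ae ?_)
  filter_upwards [volume.ae_ne 0] with t ht
  simp [dslope_of_ne φ ht, slope_def_field, hzero]

theorem continuous_mul_log_div (hφ : Continuous φ) (hφ₀ : DifferentiableAt ℝ φ 0)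
    (hzero : φ 0 = 0) {c : ℝ} (hc : c ≠ 0) : Continuous fun t => φ t * Real.log (t / c) := by
  have hlog : Continuous fun t : ℝ => t / c * Real.log (t / c) :=
    Real.continuous_mul_log.comp (continuous_id.div_const c)
  have hfactor : ∀ t, φ t * Real.log (t / c)
      = c * (dslope φ 0 t * (t / c * Real.log (t / c))) := fun t => by
    have hslope : φ t = t * dslope φ 0 t := by simpa [hzero] using (sub_smul_dslope φ 0 t).symm
    rw [hslope]
    field_simp
  simp only [hfactor]
  exact continuous_const.mul ((continuous_dslope hφ hφ₀).mul hlog)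

theorem integral_div_id_eq_neg_integral_log_mul_deriv {φ' : ℝ → ℝ}
    (hφ : ∀ t, HasDerivAt φ (φ' t) t) (hzero : φ 0 = 0) {c : ℝ} (hc : 0 < c)
    (hint : IntervalIntegrable (fun t => Real.log (t / c) * φ' t) volume 0 c) :
    ∫ t in (0 : ℝ)..c, φ t / t = -∫ t in (0 : ℝ)..c, Real.log (t / c) * φ' t := by
  have hcont : Continuous φ := continuous_iff_continuousAt.2 fun t => (hφ t).continuousAt
  have hdiff : DifferentiableAt ℝ φ 0 := (hφ 0).differentiableAt
  have hdiv := intervalIntegrable_div_id hcont hdiff hzero 0 c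
  have hderiv : ∀ t ∈ Ioo 0 c, HasDerivAt (fun t => φ t * Real.log (t / c))
      (Real.log (t / c) * φ' t + φ t / t) t := fun t ht => by
    have hlog := ((hasDerivAt_id' t).div_const c).log (div_ne_zero ht.1.ne' hc.ne')
    rw [div_div_div_cancel_right₀ hc.ne', one_div] at hlog
    exact ((hφ t).mul hlog).congr_deriv (by rw [mul_comm (φ' t), ← div_eq_mul_inv])
  have hftc := intervalIntegral.integral_eq_sub_of_hasDerivAt_of_le hc.le
    (continuous_mul_log_div hcont hdiff hzero hc.ne').continuousOn hderiv (hint.add hdiv)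
  rw [intervalIntegral.integral_add hint hdiv, div_self hc.ne', Real.log_one, hzero] at hftc
  linarith

end IntegrationByParts

section PrincipalValue

variable {f : ℝ → ℝ} {x : ℝ}

theorem intervalIntegrable_sub_div_id (hf : Continuous f) (hfx : DifferentiableAt ℝ f x)
    (a b : ℝ) : IntervalIntegrable (fun t => (f (x - t) - f (x + t)) / t) volume a b :=
  intervalIntegrable_div_id (φ := fun t => f (x - t) - f (x + t)) (by fun_prop)
    (.sub (.comp (0 : ℝ) (by simpa using hfx) (by fun_prop))
      (.comp (0 : ℝ) (by simpa using hfx) (by fun_prop)))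
    (by simp) a b

theorem setIntegral_div_sub_eq_integral_sub_div_id (hf : Continuous f) {ε R : ℝ} (hε : 0 < ε)
    (hεR : ε ≤ R) :
    ∫ y in {y : ℝ | ε < |x - y| ∧ |x - y| < R}, f y / (x - y)
      = ∫ t in ε..R, (f (x - t) - f (x + t)) / t := by
  have hint : ∀ a b, x ∉ uIcc a b → IntervalIntegrable (fun y => f y / (x - y)) volume a b :=
    fun a b hx => ContinuousOn.intervalIntegrable <| hf.continuousOn.div (by fun_prop)
      fun y hy => sub_ne_zero.2 fun h => hx (h ▸ hy)
  rw [setIntegral_lt_abs_sub_and_abs_sub_lt hε.le hεR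
    (hint _ _ <| notMem_uIcc_of_gt (by linarith) (by linarith))
    (hint _ _ <| notMem_uIcc_of_lt (by linarith) (by linarith))]
  simp only [sub_sub_cancel, sub_add_cancel_left, div_neg, ← sub_eq_add_neg, sub_div]

theorem tendsto_setIntegral_div_sub (hf : Continuous f) (hfx : DifferentiableAt ℝ f x) {R : ℝ}
    (hR : 0 < R) :
    Tendsto (fun ε => ∫ y in {y : ℝ | ε < |x - y| ∧ |x - y| < R}, f y / (x - y)) (𝓝[>] 0)
      (𝓝 (∫ t in (0 : ℝ)..R, (f (x - t) - f (x + t)) / t)) := by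
  have hprim : Continuous fun ε => ∫ t in ε..R, (f (x - t) - f (x + t)) / t := by
    simp only [intervalIntegral.integral_symm R]
    exact (intervalIntegral.continuous_primitive (intervalIntegrable_sub_div_id hf hfx) R).neg
  refine ((hprim.tendsto 0).mono_left nhdsWithin_le_nhds).congr' ?_
  filter_upwards [Ioc_mem_nhdsGT hR] with ε hε
  exact (setIntegral_div_sub_eq_integral_sub_div_id hf hε.1 hε.2).symm

theorem hilbertPVAt_iff_tendsto_integral (hf : Continuous f) (hfx : DifferentiableAt ℝ f x)
    {v : ℝ} : HilbertPVAt f x v ↔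
      Tendsto (fun R => ∫ t in (0 : ℝ)..R, (f (x - t) - f (x + t)) / t) atTop (𝓝 v) := by
  constructor
  · rintro ⟨g, hg, hgv⟩
    refine hgv.congr' ?_
    filter_upwards [eventually_gt_atTop 0] with R hR
    exact tendsto_nhds_unique (hg R hR) (tendsto_setIntegral_div_sub hf hfx hR)
  · exact fun h => ⟨_, fun R hR => tendsto_setIntegral_div_sub hf hfx hR, h⟩

theorem integral_sub_div_id_eq_integral_log_abs_mul_deriv (hf : Differentiable ℝ f) {c : ℝ}
    (hc : 0 < c)
    (hint : IntegrableOn (fun y => Real.log |(y - x) / c| * deriv f y) (Ioo (x - c) (x + c))) :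
    ∫ t in (0 : ℝ)..c, (f (x - t) - f (x + t)) / t
      = ∫ y in Ioo (x - c) (x + c), Real.log |(y - x) / c| * deriv f y := by
  have hle : x - c ≤ x + c := by linarith
  have hwhole := (intervalIntegrable_iff_integrableOn_Ioo_of_le hle).2 hint
  have hφ : ∀ t, HasDerivAt (fun t => f (x - t) - f (x + t))
      (-deriv f (x - t) - deriv f (x + t)) t := fun t =>
    ((hf (x - t)).hasDerivAt.comp_const_sub x t).sub ((hf (x + t)).hasDerivAt.comp_const_add x t)
  have hfold : ∀ t, Real.log (t / c) * (-deriv f (x - t) - deriv f (x + t))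
      = -(Real.log |(x - t - x) / c| * deriv f (x - t)
        + Real.log |(x + t - x) / c| * deriv f (x + t)) := fun t => by
    rw [sub_sub_cancel_left, add_sub_cancel_left, neg_div, abs_neg, Real.log_abs]
    ring
  have hparts := integral_div_id_eq_neg_integral_log_mul_deriv hφ (by simp) hc (by
    simp only [hfold]
    exact (intervalIntegrable_comp_sub_add_comp_add_zero hwhole).neg)
  simp only [hfold] at hparts
  rw [hparts, intervalIntegral.integral_neg, neg_neg, integral_comp_sub_add_comp_add_zero hwhole,
    intervalIntegral.integral_of_le hle, integral_Ioc_eq_integral_Ioo]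

end PrincipalValue

theorem hilbert_even_representation_general {f : ℝ → ℝ} (hf : Differentiable ℝ f) {x c : ℝ}
    (hc : 0 < c)
    (hint : IntegrableOn (fun y => Real.log |(y - x) / c| * deriv f y) (Ioo (x - c) (x + c)))
    {v : ℝ} :
    HilbertPVAt f x v ↔ Tendsto (fun R => ∫ t in Ioc c R, (f (x - t) - f (x + t)) / t) atTop
      (𝓝 (v - ∫ y in Ioo (x - c) (x + c), Real.log |(y - x) / c| * deriv f y)) := by
  have hquot := intervalIntegrable_sub_div_id hf.continuous (hf x)
  rw [hilbertPVAt_iff_tendsto_integral hf.continuous (hf x),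
    ← integral_sub_div_id_eq_integral_log_abs_mul_deriv hf hc hint,
    ← tendsto_sub_const_iff (∫ t in (0 : ℝ)..c, (f (x - t) - f (x + t)) / t)]
  refine tendsto_congr' ?_
  filter_upwards [eventually_ge_atTop c] with R hR
  rw [intervalIntegral.integral_interval_sub_left (hquot 0 R) (hquot 0 c),
    intervalIntegral.integral_of_le hR]

/-- **Representation formula for the Hilbert transform of an even function (Lemma htest).**
If `f` is `C¹`, even and bounded, and at a point `x > 0` its Hilbert transform exists
(with `π·Hf(x) = v`), the first integral below converges absolutely and the second converges
as an improper integral at infinity (with value `I₂`), then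
`π·Hf(x) = ∫_0^{2x} log|(y−x)/x| f'(y) dy + ∫_x^∞ (f(y−x) − f(y+x))/y dy`. -/
theorem hilbert_even_representation (f : ℝ → ℝ) (hf : ContDiff ℝ 1 f)
    (heven : ∀ x, f (-x) = f x) (M : ℝ) (hM : ∀ x, |f x| ≤ M)
    (x : ℝ) (hx : 0 < x) (v : ℝ) (hH : HilbertPVAt f x v)
    (h1 : IntegrableOn (fun y => Real.log |(y - x) / x| * deriv f y) (Ioo 0 (2*x)))
    (I₂ : ℝ)
    (h2 : Tendsto (fun R => ∫ y in Ioc x R, (f (y - x) - f (y + x)) / y) atTop (nhds I₂)) :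
    v = (∫ y in Ioo 0 (2*x), Real.log |(y - x) / x| * deriv f y) + I₂ := by
  have hsymm : ∀ y, f (y - x) = f (x - y) := fun y => by rw [← heven, neg_sub]
  simp only [hsymm, add_comm _ x] at h2
  rw [show Ioo 0 (2 * x) = Ioo (x - x) (x + x) by rw [sub_self, two_mul]] at h1 ⊢
  exact eq_add_of_sub_eq' <| tendsto_nhds_unique
    ((hilbert_even_representation_general (hf.differentiable one_ne_zero) hx h1).1 hH) h2
end
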